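/- (Example 1, plus part) Let d = 1 and Ψ(ξ) = (1 − cos ξ) − i sin ξ, the Lévy exponent of a rate-1 Poisson process. Then for every β ∈ (0,1) and every x ∈ [0, π/3], g_{1−β,+}(x) = ∫_ℝ e^{−x(1−cos ξ)} cos(x sin ξ) |ξ|^{β−1} dξ = +∞; consequently, for every μ ∈ P([0, π/3]), ∫_ℝ [∫∫ max(Re χ_ξ(t−s), 0) μ(dt) μ(ds)] |ξ|^{β−1} dξ = +∞. -/

import Mathlib

open MeasureTheory Complex
open scoped ENNReal

noncomputable section

/-- `χ_ξ(x) = exp(−|x| Ψ(sign(x) ξ))` for `Ψ : ℝ → ℂ` (the case `d = 1`). -/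
def chi1 (Ψ : ℝ → ℂ) (ξ x : ℝ) : ℂ :=
  Complex.exp (((-|x| : ℝ) : ℂ) * Ψ (Real.sign x * ξ))

/-- `g_{γ,+}(x) = ∫_ℝ (Re χ_ξ(x))_+ |ξ|^{−γ} dξ`, with values in `[0,∞]`. -/
def g1plus (Ψ : ℝ → ℂ) (γ : ℝ) (x : ℝ) : ℝ≥0∞ :=
  ∫⁻ ξ : ℝ, ENNReal.ofReal (max ((chi1 Ψ ξ x).re) 0) * (ENNReal.ofReal |ξ|) ^ (-γ) ∂volume

/-- `g_{γ,−}(x) = ∫_ℝ (Re χ_ξ(x))_− |ξ|^{−γ} dξ`, with values in `[0,∞]`. -/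
def g1minus (Ψ : ℝ → ℂ) (γ : ℝ) (x : ℝ) : ℝ≥0∞ :=
  ∫⁻ ξ : ℝ, ENNReal.ofReal (max (-(chi1 Ψ ξ x).re) 0) * (ENNReal.ofReal |ξ|) ^ (-γ) ∂volume

/-- The `f`-energy `E_f(μ) = ∫∫_{G×G} f(t−s) μ(dt)μ(ds)` of a measure on `ℝ`,
for a `[0,∞]`-valued kernel `f`. -/
def energyR (f : ℝ → ℝ≥0∞) (G : Set ℝ) (μ : Measure ℝ) : ℝ≥0∞ :=
  ∫⁻ t in G, ∫⁻ s in G, f (t - s) ∂μ ∂μ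

/-- The `f`-capacity `C_f(G) = [inf_{μ ∈ P(G)} E_f(μ)]⁻¹` (with `1/∞ = 0`), the infimum
being over Borel probability measures supported in `G`. -/
def capacityR (f : ℝ → ℝ≥0∞) (G : Set ℝ) : ℝ≥0∞ :=
  (⨅ (μ : Measure ℝ) (_ : IsProbabilityMeasure μ ∧ μ Gᶜ = 0), energyR f G μ)⁻¹

/-!
The exponent of a Poisson process is `2π`-periodic, hence so is `ξ ↦ (Re χ_ξ(x))₊`, which is
continuous at `ξ = 0` with value `1`. Cutting `ℝ` into periods turns `∫ F(ξ) |ξ|^s dξ`, for `F ≥ 0`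
periodic of period `T`, into the integral over one period of `F(ξ) ∑ₙ |nT + ξ|^s`, and the inner
series diverges for `s ≥ -1`. So `g_{γ,+}` is identically `+∞` when `γ ≤ 1`, and by Tonelli the
energy integral against `|ξ|^{-γ}` is the `g_{γ,+}`-energy of `μ`.
-/

theorem lintegral_eq_tsum_setLIntegral_Ioc_zsmul_add {T : ℝ} (hT : 0 < T) (f : ℝ → ℝ≥0∞) :
    ∫⁻ x, f x = ∑' n : ℤ, ∫⁻ x in Set.Ioc 0 T, f (n • T + x) := by
  have translate (n : ℤ) :
      ∫⁻ x in Set.Ioc (n • T) ((n + 1) • T), f x = ∫⁻ x in Set.Ioc 0 T, f (n • T + x) := by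
    rw [← (measurePreserving_add_left volume (n • T)).setLIntegral_comp_preimage_emb
      (measurableEmbedding_addLeft _), Set.preimage_const_add_Ioc, sub_self, add_one_zsmul,
      add_sub_cancel_left]
  rw [← setLIntegral_univ, ← iUnion_Ioc_zsmul hT,
    lintegral_iUnion (fun _ => measurableSet_Ioc) (Set.pairwise_disjoint_Ioc_zsmul T)]
  exact tsum_congr translate

theorem tsum_ofReal_abs_zsmul_add_rpow_eq_top {T : ℝ} (hT : 0 < T) {s : ℝ} (hs : -1 ≤ s) (x : ℝ) :
    ∑' n : ℤ, ENNReal.ofReal |n • T + x| ^ s = ⊤ := by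
  by_contra hfin
  have summable_rpow : Summable fun n : ℤ => |n • T + x| ^ s := by
    simpa only [← ENNReal.toReal_rpow, ENNReal.toReal_ofReal (abs_nonneg _)]
      using ENNReal.summable_toReal hfin
  have rescale (n : ℤ) : |n • T + x| ^ s = T ^ s * (1 / |n + x / T| ^ (-s)) := by
    rw [Real.rpow_neg (abs_nonneg _), one_div, inv_inv, ← Real.mul_rpow hT.le (abs_nonneg _),
      ← abs_of_pos hT, ← abs_mul, abs_of_pos hT, zsmul_eq_mul]
    field_simp
  simp only [rescale, summable_mul_left_iff (Real.rpow_pos_of_pos hT s).ne',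
    Real.summable_one_div_int_add_rpow] at summable_rpow
  linarith

theorem lintegral_mul_ofReal_abs_rpow_eq_top_of_periodic {F : ℝ → ℝ≥0∞} (hF : Measurable F) {T : ℝ}
    (hper : F.Periodic T) (hT : 0 < T) (hF0 : ∫⁻ ξ, F ξ ≠ 0) {s : ℝ} (hs : -1 ≤ s) :
    ∫⁻ ξ, F ξ * ENNReal.ofReal |ξ| ^ s = ⊤ := by
  have period_ne_zero : ∫⁻ ξ in Set.Ioc 0 T, F ξ ≠ 0 := by
    intro h
    apply hF0
    rw [lintegral_eq_tsum_setLIntegral_Ioc_zsmul_add hT]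
    simp only [add_comm (_ • T), hper.zsmul _ _, h, tsum_zero]
  calc ∫⁻ ξ, F ξ * ENNReal.ofReal |ξ| ^ s
      = ∑' n : ℤ, ∫⁻ ξ in Set.Ioc 0 T, F ξ * ENNReal.ofReal |n • T + ξ| ^ s := by
        rw [lintegral_eq_tsum_setLIntegral_Ioc_zsmul_add hT]
        simp only [add_comm (_ • T), hper.zsmul _ _]
    _ = ∫⁻ ξ in Set.Ioc 0 T, F ξ * ∑' n : ℤ, ENNReal.ofReal |n • T + ξ| ^ s := by
        rw [← lintegral_tsum fun n => by fun_prop]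
        simp only [ENNReal.tsum_mul_left]
    _ = ⊤ := by
        simp only [tsum_ofReal_abs_zsmul_add_rpow_eq_top hT hs]
        rw [lintegral_mul_const _ hF, ENNReal.mul_top period_ne_zero]

theorem lintegral_ne_zero_of_continuousAt {X : Type*} [TopologicalSpace X] [MeasurableSpace X]
    {μ : Measure X} [μ.IsOpenPosMeasure] {f : X → ℝ≥0∞} (hf : Measurable f) {x : X}
    (hcont : ContinuousAt f x) (hx : f x ≠ 0) : ∫⁻ y, f y ∂μ ≠ 0 := by
  rw [← pos_iff_ne_zero, lintegral_pos_iff_support hf]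
  exact Measure.measure_pos_of_mem_nhds μ (hcont.eventually_ne hx)

theorem measurable_real_sign : Measurable Real.sign :=
  Measurable.ite measurableSet_Iio measurable_const
    (Measurable.ite measurableSet_Ioi measurable_const measurable_const)

theorem energyR_top {G : Set ℝ} {μ : Measure ℝ} (hG : μ G ≠ 0) :
    energyR (fun _ => ⊤) G μ = ⊤ := by
  simp only [energyR, setLIntegral_const, ENNReal.top_mul hG]

section Energy

variable (G : Set ℝ) (μ : Measure ℝ) [SFinite μ]

theorem energyR_lintegral {Ω : Type*} [MeasurableSpace Ω] {ν : Measure Ω} [SFinite ν]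
    {k : Ω → ℝ → ℝ≥0∞} (hk : Measurable (Function.uncurry k)) :
    energyR (fun x => ∫⁻ ω, k ω x ∂ν) G μ = ∫⁻ ω, energyR (k ω) G μ ∂ν := by
  have measurable_diff : Measurable fun p : (ℝ × Ω) × ℝ => k p.1.2 (p.1.1 - p.2) :=
    hk.comp (by fun_prop : Measurable fun p : (ℝ × Ω) × ℝ => (p.1.2, p.1.1 - p.2))
  calc energyR (fun x => ∫⁻ ω, k ω x ∂ν) G μ
      = ∫⁻ t in G, ∫⁻ ω, ∫⁻ s in G, k ω (t - s) ∂μ ∂ν ∂μ :=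
        lintegral_congr fun t => lintegral_lintegral_swap (by fun_prop)
    _ = ∫⁻ ω, energyR (k ω) G μ ∂ν :=
        lintegral_lintegral_swap measurable_diff.lintegral_prod_right'.aemeasurable

theorem energyR_mul_const {f : ℝ → ℝ≥0∞} (hf : Measurable f) (c : ℝ≥0∞) :
    energyR (fun x => f x * c) G μ = energyR f G μ * c := by
  have measurable_inner : Measurable fun t => ∫⁻ s in G, f (t - s) ∂μ :=
    (by fun_prop : Measurable fun p : ℝ × ℝ => f (p.1 - p.2)).lintegral_prod_right'
  unfold energyR
  rw [← lintegral_mul_const _ measurable_inner]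
  exact lintegral_congr fun t => lintegral_mul_const _ (by fun_prop)

end Energy

section Chi1

variable {Ψ : ℝ → ℂ}

theorem measurable_uncurry_chi1 (hΨ : Measurable Ψ) : Measurable (Function.uncurry (chi1 Ψ)) := by
  have := measurable_real_sign
  unfold Function.uncurry chi1
  fun_prop

theorem periodic_chi1 {T : ℝ} (hper : Ψ.Periodic T) (x : ℝ) :
    Function.Periodic (fun ξ => chi1 Ψ ξ x) T := by
  intro ξ
  have : Ψ (Real.sign x * (ξ + T)) = Ψ (Real.sign x * ξ) := by
    rcases Real.sign_apply_eq x with h | h | h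
    · rw [h, neg_one_mul, neg_one_mul, neg_add', hper.sub_eq]
    · simp only [h, zero_mul]
    · simp only [h, one_mul, hper ξ]
  simp only [chi1, this]

theorem chi1_zero_left (h0 : Ψ 0 = 0) (x : ℝ) : chi1 Ψ 0 x = 1 := by
  simp only [chi1, mul_zero, h0, Complex.exp_zero]

theorem continuousAt_chi1_zero (hcont : ContinuousAt Ψ 0) (x : ℝ) :
    ContinuousAt (fun ξ => chi1 Ψ ξ x) 0 := by
  have : ContinuousAt (fun ξ => Ψ (Real.sign x * ξ)) 0 :=
    ContinuousAt.comp' (by rwa [mul_zero]) (by fun_prop)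
  exact (this.const_mul _).cexp

theorem g1plus_eq_top_of_periodic (hΨ : Measurable Ψ) {T : ℝ} (hper : Ψ.Periodic T) (hT : 0 < T)
    (hcont : ContinuousAt Ψ 0) (h0 : Ψ 0 = 0) {γ : ℝ} (hγ : γ ≤ 1) (x : ℝ) :
    g1plus Ψ γ x = ⊤ := by
  have measurable_chi1 : Measurable fun ξ => chi1 Ψ ξ x :=
    (measurable_uncurry_chi1 hΨ).of_uncurry_right
  have measurable_pos : Measurable fun ξ => ENNReal.ofReal (max (chi1 Ψ ξ x).re 0) := by fun_prop
  have continuousAt_pos : ContinuousAt (fun ξ => ENNReal.ofReal (max (chi1 Ψ ξ x).re 0)) 0 :=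
    (ENNReal.continuous_ofReal.comp (Complex.continuous_re.max continuous_const)).continuousAt.comp
      (continuousAt_chi1_zero hcont x)
  refine lintegral_mul_ofReal_abs_rpow_eq_top_of_periodic measurable_pos
    ((periodic_chi1 hper x).comp fun z => ENNReal.ofReal (max z.re 0)) hT
    (lintegral_ne_zero_of_continuousAt measurable_pos continuousAt_pos ?_) (neg_le_neg hγ)
  simp [chi1_zero_left h0]

theorem energyR_g1plus (hΨ : Measurable Ψ) (γ : ℝ) (G : Set ℝ) (μ : Measure ℝ) [SFinite μ] :
    energyR (g1plus Ψ γ) G μ =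
      ∫⁻ ξ, energyR (fun x => ENNReal.ofReal (max (chi1 Ψ ξ x).re 0)) G μ
        * ENNReal.ofReal |ξ| ^ (-γ) := by
  have measurable_chi1 : Measurable fun p : ℝ × ℝ => chi1 Ψ p.1 p.2 := measurable_uncurry_chi1 hΨ
  have measurable_chi1_left (ξ : ℝ) : Measurable (chi1 Ψ ξ) := by fun_prop
  calc energyR (g1plus Ψ γ) G μ
      = ∫⁻ ξ, energyR (fun x => ENNReal.ofReal (max (chi1 Ψ ξ x).re 0)
          * ENNReal.ofReal |ξ| ^ (-γ)) G μ := energyR_lintegral G μ (by fun_prop)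
    _ = _ := lintegral_congr fun ξ => energyR_mul_const G μ (by fun_prop) _

end Chi1

/-- The Lévy exponent `Ψ(ζ) = (1 − cos ζ) − i sin ζ` of a rate-1 Poisson process `N`,
normalised by `E exp(iζ N_t) = exp(−t Ψ(ζ))`. -/
def poissonExponent : ℝ → ℂ := fun ζ =>
  ((1 - Real.cos ζ : ℝ) : ℂ) - (Real.sin ζ : ℂ) * Complex.I

theorem continuous_poissonExponent : Continuous poissonExponent := by
  unfold poissonExponent
  fun_prop

theorem periodic_poissonExponent : poissonExponent.Periodic (2 * Real.pi) := fun ζ => by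
  simp only [poissonExponent, Real.cos_add_two_pi, Real.sin_add_two_pi]

theorem poissonExponent_zero : poissonExponent 0 = 0 := by
  simp [poissonExponent]

theorem re_chi1_poissonExponent (ξ x : ℝ) :
    (chi1 poissonExponent ξ x).re =
      Real.exp (-(|x| * (1 - Real.cos ξ))) * Real.cos (x * Real.sin ξ) := by
  have re_chi1 : (chi1 poissonExponent ξ x).re = Real.exp (-(|x| * (1 - Real.cos (x.sign * ξ)))) *
      Real.cos (|x| * Real.sin (x.sign * ξ)) := by
    simp [chi1, poissonExponent, Complex.exp_re, -Complex.ofReal_cos, -Complex.ofReal_sin]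
  rw [re_chi1]
  rcases lt_trichotomy x 0 with h | rfl | h
  · simp [Real.sign_of_neg h, abs_of_neg h]
  · simp
  · simp [Real.sign_of_pos h, abs_of_pos h]

theorem g1plus_poissonExponent_eq_top {γ : ℝ} (hγ : γ ≤ 1) (x : ℝ) :
    g1plus poissonExponent γ x = ⊤ :=
  g1plus_eq_top_of_periodic continuous_poissonExponent.measurable periodic_poissonExponent
    Real.two_pi_pos continuous_poissonExponent.continuousAt poissonExponent_zero hγ x

theorem g1plus_poissonExponent_eq_lintegral (γ x : ℝ) :
    g1plus poissonExponent γ x =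
      ∫⁻ ξ, ENNReal.ofReal (Real.exp (-(|x| * (1 - Real.cos ξ))) * Real.cos (x * Real.sin ξ))
        * ENNReal.ofReal |ξ| ^ (-γ) := by
  simp only [g1plus, re_chi1_poissonExponent, ENNReal.ofReal_max, ENNReal.ofReal_zero,
    zero_le, sup_of_le_left]

theorem stmt19_general (β : ℝ) (hβ : 0 ≤ β) :
    (∀ x : ℝ,
      g1plus poissonExponent (1 - β) x =
        ∫⁻ ξ, ENNReal.ofReal (Real.exp (-(|x| * (1 - Real.cos ξ))) * Real.cos (x * Real.sin ξ))
          * ENNReal.ofReal |ξ| ^ (β - 1) ∧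
      g1plus poissonExponent (1 - β) x = ⊤) ∧
    (∀ (G : Set ℝ) (μ : Measure ℝ) [SFinite μ], μ G ≠ 0 →
      ∫⁻ ξ, energyR (fun x => ENNReal.ofReal (max (chi1 poissonExponent ξ x).re 0)) G μ
        * ENNReal.ofReal |ξ| ^ (β - 1) = ⊤) := by
  have g1plus_eq_top := g1plus_poissonExponent_eq_top (sub_le_self 1 hβ)
  rw [← neg_sub 1 β]
  refine ⟨fun x => ⟨g1plus_poissonExponent_eq_lintegral _ x, g1plus_eq_top x⟩, fun G μ _ hG => ?_⟩
  rw [← energyR_g1plus continuous_poissonExponent.measurable, funext g1plus_eq_top, energyR_top hG]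

/-- **Example 1, plus part.** For `d = 1` and
`Ψ(ξ) = (1 − cos ξ) − i sin ξ` (the Lévy exponent of a rate-1 Poisson process): for every
`β ∈ (0,1)` and every `x ∈ [0, π/3]`,
`g_{1−β,+}(x) = ∫_ℝ e^{−x(1−cos ξ)} cos(x sin ξ) |ξ|^{β−1} dξ = +∞`; consequently, for
every Borel probability measure `μ` supported in `[0, π/3]`,
`∫_ℝ [∫∫ (Re χ_ξ(t−s))_+ μ(dt)μ(ds)] |ξ|^{β−1} dξ = +∞`. -/
theorem stmt19 (β : ℝ) (hβ0 : 0 < β) (hβ1 : β < 1) :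
    (∀ x ∈ Set.Icc (0 : ℝ) (Real.pi / 3),
      g1plus (fun ζ : ℝ => ((1 - Real.cos ζ : ℝ) : ℂ) - (Real.sin ζ : ℂ) * Complex.I)
          (1 - β) x
        = ∫⁻ ξ : ℝ,
            ENNReal.ofReal (Real.exp (-(x * (1 - Real.cos ξ))) * Real.cos (x * Real.sin ξ))
              * (ENNReal.ofReal |ξ|) ^ (β - 1) ∂volume ∧
      g1plus (fun ζ : ℝ => ((1 - Real.cos ζ : ℝ) : ℂ) - (Real.sin ζ : ℂ) * Complex.I)
        (1 - β) x = ⊤) ∧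
    (∀ μ : Measure ℝ, IsProbabilityMeasure μ → μ (Set.Icc (0 : ℝ) (Real.pi / 3))ᶜ = 0 →
      ∫⁻ ξ : ℝ,
        (∫⁻ t in Set.Icc (0 : ℝ) (Real.pi / 3), ∫⁻ s in Set.Icc (0 : ℝ) (Real.pi / 3),
          ENNReal.ofReal (max ((chi1 (fun ζ : ℝ => ((1 - Real.cos ζ : ℝ) : ℂ)
            - (Real.sin ζ : ℂ) * Complex.I) ξ (t - s)).re) 0) ∂μ ∂μ)
          * (ENNReal.ofReal |ξ|) ^ (β - 1) ∂volume = ⊤) :=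
  ⟨fun x hx => by simpa only [abs_of_nonneg hx.1] using! (stmt19_general β hβ0.le).1 x,
    fun μ _ hG => (stmt19_general β hβ0.le).2 _ μ
      (by simp [(prob_compl_eq_zero_iff measurableSet_Icc).1 hG])⟩
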